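/- Let $(\mu_n)$ be a sequence of Borel probability measures on $\mathbb{R}$ with all moments finite, and suppose there exist $d_0 > 0$, $t \in [0,1]$ such that for every $\varepsilon > 0$ there is $K_0(\varepsilon)$ with $\left|\int x^k d\mu_n\right| \leq d_0^k(\varepsilon k)^{kt}$ for all $k, n \geq K_0(\varepsilon)$. If $\mu$ is a probability measure with moments $M^{(k)} = \lim_{n\to\infty}\int x^k d\mu_n$ for all $k$, then $\mu_n$ converges weakly to $\mu$. -/

import Mathlib

open MeasureTheory Filter

lemma aux_taylor (w : ℂ) (hw : w.re = 0) (N : ℕ) : ∀ s : ℝ, 0 ≤ s →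
    ‖Complex.exp (s * w) - ∑ k ∈ Finset.range N, (s * w) ^ k / (k.factorial : ℂ)‖
      ≤ (s * ‖w‖) ^ N / N.factorial := by
  induction N with
  | zero =>
    intro s hs
    simp [Complex.norm_exp, hw]
  | succ N ih =>
    intro s hs
    have hd : ∀ x : ℝ, HasDerivAt (fun x : ℝ => Complex.exp (x * w) -
        ∑ k ∈ Finset.range (N + 1), (x * w) ^ k / (k.factorial : ℂ))
        (w * (Complex.exp (x * w) - ∑ k ∈ Finset.range N, (x * w) ^ k / (k.factorial : ℂ))) x := by
      intro x
      have h1 : HasDerivAt (fun x : ℝ => (x : ℂ) * w) w x := by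
        simpa using (Complex.ofRealCLM.hasDerivAt (x := x)).mul_const w
      have h2 : HasDerivAt (fun x : ℝ => ∑ k ∈ Finset.range (N + 1),
          ((x : ℂ) * w) ^ k / (k.factorial : ℂ))
          (∑ k ∈ Finset.range (N + 1),
            ((k : ℂ) * ((x : ℂ) * w) ^ (k - 1) * w) / (k.factorial : ℂ)) x := by
        apply HasDerivAt.fun_sum
        intro k _
        exact (h1.fun_pow k).div_const _
      refine (h1.cexp.sub h2).congr_deriv (Eq.symm ?_)
      rw [Finset.sum_range_succ', mul_sub, Finset.mul_sum]
      simp only [Nat.cast_zero, zero_mul, zero_div, add_zero, Nat.add_sub_cancel]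
      congr 1
      · ring
      · apply Finset.sum_congr rfl
        intro k _
        have : (k.factorial : ℂ) ≠ 0 := by exact_mod_cast k.factorial_ne_zero
        have h3 : ((k : ℂ) + 1) ≠ 0 := by exact_mod_cast k.succ_ne_zero
        rw [Nat.factorial_succ]
        push_cast
        field_simp
    have hB : ∀ x : ℝ, HasDerivAt (fun x : ℝ => (x * ‖w‖) ^ (N + 1) / ((N + 1).factorial : ℝ))
        (‖w‖ * ((x * ‖w‖) ^ N / N.factorial)) x := by
      intro x
      have h1 : HasDerivAt (fun x : ℝ => x * ‖w‖) ‖w‖ x := by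
        simpa using (hasDerivAt_id x).mul_const ‖w‖
      refine ((h1.fun_pow (N + 1)).div_const _).congr_deriv (Eq.symm ?_)
      have : (N.factorial : ℝ) ≠ 0 := by exact_mod_cast N.factorial_ne_zero
      have h3 : ((N : ℝ) + 1) ≠ 0 := by exact_mod_cast N.succ_ne_zero
      rw [Nat.factorial_succ]
      push_cast
      field_simp
    refine image_norm_le_of_norm_deriv_right_le_deriv_boundary (a := 0) (b := s)
      (fun x _ => (hd x).continuousAt.continuousWithinAt)
      (fun x _ => (hd x).hasDerivWithinAt) ?_ hB ?_ (Set.right_mem_Icc.2 hs)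
    · simp [Finset.sum_range_succ']
    · intro x hx
      rw [norm_mul]
      exact mul_le_mul_of_nonneg_left (ih x hx.1) (norm_nonneg _)

lemma aux_charFun (ν : Measure ℝ) [IsProbabilityMeasure ν]
    (h : ∀ k : ℕ, Integrable (fun x : ℝ => x ^ k) ν) (θ : ℝ) (N : ℕ) (hN : Even N) :
    ‖charFun ν θ - ∑ k ∈ Finset.range N,
      (θ * Complex.I) ^ k / (k.factorial : ℂ) * ((∫ x : ℝ, x ^ k ∂ν : ℝ) : ℂ)‖
      ≤ |θ| ^ N / N.factorial * ∫ x : ℝ, x ^ N ∂ν := by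
  have hk : ∀ k : ℕ, Integrable (fun x : ℝ =>
      (θ * Complex.I) ^ k / (k.factorial : ℂ) * ((x ^ k : ℝ) : ℂ)) ν :=
    fun k => ((h k).ofReal (𝕜 := ℂ)).const_mul _
  have hexp : Integrable (fun x : ℝ => Complex.exp (θ * x * Complex.I)) ν := by
    refine Integrable.of_bound (C := 1) (by fun_prop) ?_
    filter_upwards with x
    simp [Complex.norm_exp]
  have e : charFun ν θ - ∑ k ∈ Finset.range N,
      (θ * Complex.I) ^ k / (k.factorial : ℂ) * ((∫ x : ℝ, x ^ k ∂ν : ℝ) : ℂ)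
      = ∫ x : ℝ, (Complex.exp (θ * x * Complex.I) - ∑ k ∈ Finset.range N,
        (θ * Complex.I) ^ k / (k.factorial : ℂ) * ((x ^ k : ℝ) : ℂ)) ∂ν := by
    rw [integral_sub hexp (integrable_finsetSum _ fun k _ => hk k),
      integral_finsetSum _ fun k _ => hk k, charFun_apply_real]
    congr 1
    apply Finset.sum_congr rfl
    intro k _
    rw [integral_const_mul, integral_complex_ofReal]
  rw [e, ← integral_const_mul]
  refine norm_integral_le_of_norm_le ((h N).const_mul _) ?_
  filter_upwards with x
  have := aux_taylor (θ * x * Complex.I) (by simp) N 1 zero_le_one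
  simp only [Complex.ofReal_one, one_mul] at this
  have e2 : ∀ k : ℕ, (θ * Complex.I) ^ k / (k.factorial : ℂ) * ((x ^ k : ℝ) : ℂ)
      = (θ * x * Complex.I) ^ k / (k.factorial : ℂ) := by
    intro k
    push_cast
    ring
  simp only [e2]
  refine this.trans (le_of_eq ?_)
  have : ‖(θ * x * Complex.I : ℂ)‖ = |θ| * |x| := by simp
  rw [this, mul_pow, hN.pow_abs x]
  ring

theorem weak_convergence_from_moment_bounds
    (μn : ℕ → Measure ℝ) (hμn : ∀ n, IsProbabilityMeasure (μn n))
    (μ : Measure ℝ) (hμ : IsProbabilityMeasure μ)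
    (hmomn : ∀ n k : ℕ, Integrable (fun x : ℝ => x ^ k) (μn n))
    (hmom : ∀ k : ℕ, Integrable (fun x : ℝ => x ^ k) μ)
    (d₀ t : ℝ) (hd₀ : 0 < d₀) (ht0 : 0 ≤ t) (ht1 : t ≤ 1)
    (hbound : ∀ ε : ℝ, 0 < ε → ∃ K₀ : ℕ, ∀ k n : ℕ, K₀ ≤ k → K₀ ≤ n →
      |∫ x : ℝ, x ^ k ∂(μn n)| ≤ d₀ ^ k * (ε * k) ^ ((k : ℝ) * t))
    (M : ℕ → ℝ)
    (hμM : ∀ k : ℕ, (∫ x : ℝ, x ^ k ∂μ) = M k)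
    (hlim : ∀ k : ℕ, Tendsto (fun n => ∫ x : ℝ, x ^ k ∂(μn n)) atTop (nhds (M k))) :
    ∀ f : BoundedContinuousFunction ℝ ℝ,
      Tendsto (fun n => ∫ x : ℝ, f x ∂(μn n)) atTop (nhds (∫ x : ℝ, f x ∂μ)) := by
  suffices H : ∀ θ : ℝ, Tendsto (fun n => charFun (μn n) θ) atTop (nhds (charFun μ θ)) by
    let P : ℕ → ProbabilityMeasure ℝ := fun n => ⟨μn n, hμn n⟩
    let Q : ProbabilityMeasure ℝ := ⟨μ, hμ⟩
    have hPQ : Tendsto P atTop (nhds Q) :=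
      ProbabilityMeasure.tendsto_of_tendsto_charFun (μ := P) (μ₀ := Q) H
    exact ProbabilityMeasure.tendsto_iff_forall_integral_tendsto.1 hPQ
  intro θ
  -- choose ε
  set c : ℝ := (|θ| + 1) * d₀ * Real.exp 1 with hc
  have hcpos : 0 < c := by positivity
  obtain ⟨K, hK⟩ := hbound (1 / (2 * c)) (by positivity)
  -- key tail bound
  have key : ∀ N n : ℕ, Even N → K ≤ N → 2 * c ≤ N → K ≤ n →
      |θ| ^ N / N.factorial * (∫ x : ℝ, x ^ N ∂(μn n)) ≤ (1 / 2) ^ N := by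
    intro N n hev hN hN2 hn
    have h1 : (1 : ℝ) ≤ 1 / (2 * c) * N := by
      rw [one_div, inv_mul_eq_div, le_div_iff₀ (by positivity)]
      linarith
    have h2 : (1 / (2 * c) * N) ^ ((N : ℝ) * t) ≤ (1 / (2 * c) * N) ^ N := by
      rw [← Real.rpow_natCast (1 / (2 * c) * N) N]
      apply Real.rpow_le_rpow_of_exponent_le h1
      nlinarith [(Nat.cast_nonneg N : (0 : ℝ) ≤ N)]
    have h3 : (N : ℝ) ^ N / N.factorial ≤ Real.exp 1 ^ N := by
      rw [← Real.exp_nat_mul, mul_one]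
      exact Real.pow_div_factorial_le_exp _ (Nat.cast_nonneg N) N
    have h4 := (le_abs_self _).trans ((hK N n hN hn).trans
      (mul_le_mul_of_nonneg_left h2 (by positivity)))
    calc |θ| ^ N / N.factorial * (∫ x : ℝ, x ^ N ∂(μn n))
        ≤ (|θ| + 1) ^ N / N.factorial * (d₀ ^ N * (1 / (2 * c) * N) ^ N) := by
          refine mul_le_mul ?_ h4 ?_ (by positivity)
          · gcongr
            linarith
          · exact integral_nonneg fun x => hev.pow_nonneg x
      _ = ((|θ| + 1) * d₀ * (1 / (2 * c))) ^ N * ((N : ℝ) ^ N / N.factorial) := by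
          simp only [mul_pow]
          ring
      _ ≤ ((|θ| + 1) * d₀ * (1 / (2 * c))) ^ N * Real.exp 1 ^ N := by gcongr
      _ = (1 / 2) ^ N := by
          rw [← mul_pow]
          congr 1
          rw [hc]
          field_simp
  have keyμ : ∀ N : ℕ, Even N → K ≤ N → 2 * c ≤ N →
      |θ| ^ N / N.factorial * (∫ x : ℝ, x ^ N ∂μ) ≤ (1 / 2) ^ N := by
    intro N hev hN hN2
    rw [hμM N]
    refine le_of_tendsto ((hlim N).const_mul (|θ| ^ N / N.factorial)) ?_
    filter_upwards [eventually_ge_atTop K] with n hn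
    exact key N n hev hN hN2 hn
  rw [Metric.tendsto_atTop']
  intro δ hδ
  obtain ⟨m, hm⟩ := exists_pow_lt_of_lt_one (show 0 < δ / 3 by positivity)
    (show (1 / 2 : ℝ) < 1 by norm_num)
  obtain ⟨N, hev, hKN, hcN, hmN⟩ : ∃ N : ℕ, Even N ∧ K ≤ N ∧ 2 * c ≤ N ∧ m ≤ N := by
    refine ⟨2 * (K + m + ⌈2 * c⌉₊), even_two_mul _, by omega, ?_, by omega⟩
    have := Nat.le_ceil (2 * c)
    push_cast
    nlinarith [(Nat.cast_nonneg K : (0 : ℝ) ≤ K), (Nat.cast_nonneg m : (0 : ℝ) ≤ m)]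
  have hsmall : (1 / 2 : ℝ) ^ N < δ / 3 :=
    (pow_le_pow_of_le_one (by norm_num) (by norm_num) hmN).trans_lt hm
  let S : Measure ℝ → ℂ := fun ν => ∑ k ∈ Finset.range N,
    (θ * Complex.I) ^ k / (k.factorial : ℂ) * ((∫ x : ℝ, x ^ k ∂ν : ℝ) : ℂ)
  have hS : Tendsto (fun n => S (μn n)) atTop (nhds (S μ)) := by
    refine tendsto_finsetSum _ fun k _ => Tendsto.const_mul _ ?_
    rw [hμM k]
    exact (Complex.continuous_ofReal.tendsto _).comp (hlim k)
  obtain ⟨n₀, hn₀⟩ := Metric.tendsto_atTop.1 hS (δ / 3) (by positivity)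
  refine ⟨max n₀ K, fun n hn => ?_⟩
  have hn1 : n₀ ≤ n := (le_max_left _ _).trans hn.le
  have hn2 : K ≤ n := (le_max_right _ _).trans hn.le
  have a1 : dist (charFun (μn n) θ) (S (μn n)) < δ / 3 := by
    rw [dist_eq_norm]
    exact ((aux_charFun (μn n) (hmomn n) θ N hev).trans (key N n hev hKN hcN hn2)).trans_lt hsmall
  have a2 : dist (S μ) (charFun μ θ) < δ / 3 := by
    rw [dist_comm, dist_eq_norm]
    exact ((aux_charFun μ hmom θ N hev).trans (keyμ N hev hKN hcN)).trans_lt hsmall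
  have a3 := hn₀ n hn1
  have a4 := dist_triangle4 (charFun (μn n) θ) (S (μn n)) (S μ) (charFun μ θ)
  linarith
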